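/- arXiv:1506.05237 — 2 statements merged into one kernel-verified Lean document; each statement's English description precedes it below -/
import Mathlib

section
/- For any sequence D = (D_n)_{n=1}^∞ of nonempty open subsets of [0,1] forming a base for the topology of [0,1], the space X_D = (C[0,1], ‖·‖_D) is midpoint locally uniformly rotund, has the diameter 2 property, and has the local diameter 2 property +. -/
open Set Filter Topology

/-- The `n`-th seminorm: `‖x‖ₙ = sup_{d ∈ Dₙ} |x d|`. -/
noncomputable def seminormD (D : ℕ → Set (Icc (0:ℝ) 1)) (n : ℕ)
    (x : C(Icc (0:ℝ) 1, ℝ)) : ℝ :=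
  ⨆ d : D n, |x d|

/-- The norm `‖x‖_D = (Σₙ 2⁻ⁿ ‖x‖ₙ²)^{1/2}` (indexing the sequence from `0`,
with weight `2^{-(n+1)}`). -/
noncomputable def normD (D : ℕ → Set (Icc (0:ℝ) 1)) (x : C(Icc (0:ℝ) 1, ℝ)) : ℝ :=
  Real.sqrt (∑' n : ℕ, (1 / 2 : ℝ) ^ (n + 1) * (seminormD D n x) ^ 2)

/-- `f` is a norm-one linear functional on `X_D = (C[0,1], ‖·‖_D)`. -/
def DualNormOneD (D : ℕ → Set (Icc (0:ℝ) 1)) (f : C(Icc (0:ℝ) 1, ℝ) →ₗ[ℝ] ℝ) : Prop :=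
  (∀ x, |f x| ≤ normD D x) ∧ ∀ c : ℝ, c < 1 → ∃ x, normD D x ≤ 1 ∧ c < |f x|

/-- The weak topology of `X_D = (C[0,1], ‖·‖_D)`: the topology induced by all
`‖·‖_D`-bounded linear functionals. -/
noncomputable def weakTopD (D : ℕ → Set (Icc (0:ℝ) 1)) :
    TopologicalSpace C(Icc (0:ℝ) 1, ℝ) :=
  ⨅ f : {f : C(Icc (0:ℝ) 1, ℝ) →ₗ[ℝ] ℝ // ∃ c : ℝ, ∀ x, |f x| ≤ c * normD D x},
    TopologicalSpace.induced (fun x => f.1 x) inferInstance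

/-!
Evaluating `‖x + y‖² + ‖x - y‖² - 2‖x‖²` term by term shows that `‖x ± y_k‖_D → ‖x‖_D` forces
`‖x ± y_k‖_n → ‖x‖_n` for every `n`. On a basic set `D_n` where `x` is nearly constant, the identity
`|x| + |y| = max |x + y| |x - y|` turns this into smallness of `y_k`, and compactness makes the
smallness uniform: this is MLUR.

For the diameter 2 properties, let `‖x‖_D = 1`. Finitely many of the `D_n` carry almost all of the
norm, and since there are no isolated points one finds disjointly supported bumps `0 ≤ φ_k ≤ 1`,
each equal to `1` at a point of each of these `D_n` where `|x|` is almost `‖x‖_n`. The functions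
`x - 2 φ_k x` satisfy `|x - 2 φ_k x| ≤ |x|`, so they lie in the unit ball, they are at distance
almost `2` from `x`, and they converge weakly to `x` because a bounded functional is summable along
a bounded disjointly supported sequence.
-/

section RotundityAndDiameter

variable {E : Type*} [AddCommGroup E] [Module ℝ E]

/-- Midpoint local uniform rotundity of the space `(E, N)`. -/
def IsMLUR (N : Seminorm ℝ E) : Prop :=
  ∀ x : E, N x = 1 → ∀ y : ℕ → E,
    Tendsto (fun k => N (x + y k)) atTop (𝓝 1) →
    Tendsto (fun k => N (x - y k)) atTop (𝓝 1) →
    Tendsto (fun k => N (y k)) atTop (𝓝 0)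

/-- Continuity of the linear functional `f` on `(E, N)`, expressed without putting a topology
on `E`. -/
def IsBoundedFor (N : Seminorm ℝ E) (f : E →ₗ[ℝ] ℝ) : Prop :=
  ∃ c : ℝ, ∀ x, |f x| ≤ c * N x

/-- The linear functional `f` lies on the unit sphere of the dual of `(E, N)`. -/
def DualNormOne (N : Seminorm ℝ E) (f : E →ₗ[ℝ] ℝ) : Prop :=
  (∀ x, |f x| ≤ N x) ∧ ∀ c : ℝ, c < 1 → ∃ x, N x ≤ 1 ∧ c < |f x|

/-- The weak topology of `(E, N)`. -/
abbrev weakTopology (N : Seminorm ℝ E) : TopologicalSpace E :=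
  ⨅ f : {f : E →ₗ[ℝ] ℝ // IsBoundedFor N f},
    TopologicalSpace.induced (fun x => f.1 x) inferInstance

/-- The diameter 2 property of `(E, N)`: nonempty relatively weakly open subsets of the unit ball
have diameter 2. -/
def HasD2P (N : Seminorm ℝ E) : Prop :=
  ∀ W : Set E, W.Nonempty →
    (∃ V : Set E, IsOpen[weakTopology N] V ∧ W = V ∩ {x | N x ≤ 1}) →
    sSup {r : ℝ | ∃ a ∈ W, ∃ b ∈ W, r = N (a - b)} = 2

/-- The local diameter 2 property + of `(E, N)`: every norm-one point of a slice of the unit ball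
is almost at distance 2 from another point of that slice. -/
def HasLD2PPlus (N : Seminorm ℝ E) : Prop :=
  ∀ f : E →ₗ[ℝ] ℝ, DualNormOne N f →
    ∀ ε : ℝ, 0 < ε → ∀ δ : ℝ, 0 < δ →
      ∀ x : E, N x ≤ 1 → f x > 1 - ε → N x = 1 →
        ∃ y : E, N y ≤ 1 ∧ f y > 1 - ε ∧ N (x - y) > 2 - δ

/-- The sequence `u` converges to `0` in the weak topology of `(E, N)`. -/
def WeaklyNull (N : Seminorm ℝ E) (u : ℕ → E) : Prop :=
  ∀ f : E →ₗ[ℝ] ℝ, IsBoundedFor N f → Tendsto (fun k => f (u k)) atTop (𝓝 0)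

/-- Every norm-one `x` is the weak limit of a sequence `x + u k` in the unit ball that stays almost
at distance 2 from `x`; a sequential property implying both diameter 2 properties above. -/
def HasDiametralSequences (N : Seminorm ℝ E) : Prop :=
  ∀ x : E, N x = 1 → ∀ δ : ℝ, 0 < δ →
    ∃ u : ℕ → E, WeaklyNull N u ∧ (∀ k, N (x + u k) ≤ 1) ∧ ∀ k, 2 - δ < N (u k)

variable {N : Seminorm ℝ E}

lemma WeaklyNull.smul_of_abs_le {u : ℕ → E} (hu : WeaklyNull N u) {t : ℕ → ℝ} {C : ℝ}
    (ht : ∀ k, |t k| ≤ C) : WeaklyNull N fun k => t k • u k := by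
  intro f hf
  have ht_bdd : IsBoundedUnder (· ≤ ·) atTop fun k => ‖t k‖ := isBoundedUnder_of ⟨C, ht⟩
  simpa only [map_smul, smul_eq_mul, mul_comm] using (hu f hf).zero_mul_isBoundedUnder_le ht_bdd

lemma WeaklyNull.eventually_add_mem {u : ℕ → E} (hu : WeaklyNull N u) {V : Set E}
    (hV : IsOpen[weakTopology N] V) {x : E} (hx : x ∈ V) : ∀ᶠ k in atTop, x + u k ∈ V := by
  have hlim : Tendsto (fun k => x + u k) atTop (@nhds E (weakTopology N) x) := by
    rw [weakTopology, nhds_iInf, tendsto_iInf]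
    rintro ⟨f, hf⟩
    rw [nhds_induced, tendsto_comap_iff]
    simpa [Function.comp_def] using (hu f hf).const_add (f x)
  exact hlim (@IsOpen.mem_nhds E (weakTopology N) x V hV hx)

lemma continuous_seminorm_add_smul (N : Seminorm ℝ E) (x z : E) :
    Continuous fun t : ℝ => N (x + t • z) := by
  refine (LipschitzWith.of_le_add_mul (N z).toNNReal fun s t => ?_).continuous
  calc N (x + s • z) = N (x + t • z + (s - t) • z) := by rw [sub_smul]; congr 1; abel
    _ ≤ N (x + t • z) + N ((s - t) • z) := map_add_le_add N _ _
    _ = N (x + t • z) + (N z).toNNReal * dist s t := by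
      rw [map_smul_eq_mul, Real.norm_eq_abs, Real.dist_eq, Real.coe_toNNReal _ (apply_nonneg N z),
        mul_comm]

lemma exists_seminorm_add_smul_eq_one {x z : E} (hx : N x ≤ 1) (hz : 1 ≤ N z) :
    ∃ t ∈ Icc (0 : ℝ) 2, N (x + t • z) = 1 := by
  refine intermediate_value_Icc zero_le_two (continuous_seminorm_add_smul N x z).continuousOn
    ⟨by simpa using hx, ?_⟩
  have htriangle : N ((2 : ℝ) • z) ≤ N (x + (2 : ℝ) • z) + N x := by
    simpa only [add_sub_cancel_left] using map_sub_le_add N (x + (2 : ℝ) • z) x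
  rw [map_smul_eq_mul, Real.norm_two] at htriangle
  linarith

lemma WeaklyNull.exists_mem_seminorm_eq_one {u : ℕ → E} (hu : WeaklyNull N u)
    (hu_ge : ∀ k, 1 ≤ N (u k)) {V : Set E} (hV : IsOpen[weakTopology N] V) {x : E} (hxV : x ∈ V)
    (hx : N x ≤ 1) : ∃ z ∈ V, N z = 1 := by
  choose t ht hnorm using fun k => exists_seminorm_add_smul_eq_one hx (hu_ge k)
  have htu : WeaklyNull N fun k => t k • u k :=
    hu.smul_of_abs_le fun k => (abs_of_nonneg (ht k).1).trans_le (ht k).2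
  obtain ⟨k, hk⟩ := (htu.eventually_add_mem hV hxV).exists
  exact ⟨_, hk, hnorm k⟩

lemma HasDiametralSequences.exists_weaklyNull_one_le (hN : HasDiametralSequences N)
    (hne : ∃ x, N x ≠ 0) : ∃ u : ℕ → E, WeaklyNull N u ∧ ∀ k, 1 ≤ N (u k) := by
  obtain ⟨x, hx⟩ := hne
  have hunit : N ((N x)⁻¹ • x) = 1 := by
    rw [map_smul_eq_mul, norm_inv, Real.norm_of_nonneg (apply_nonneg N x), inv_mul_cancel₀ hx]
  obtain ⟨u, hu, -, hfar⟩ := hN _ hunit 1 one_pos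
  exact ⟨u, hu, fun k => by linarith [hfar k]⟩

lemma HasDiametralSequences.hasD2P (hN : HasDiametralSequences N) (hne : ∃ x, N x ≠ 0) :
    HasD2P N := by
  rintro W ⟨x₀, hx₀⟩ ⟨V, hV, rfl⟩
  obtain ⟨v, hv, hv_ge⟩ := hN.exists_weaklyNull_one_le hne
  obtain ⟨x, hxV, hx⟩ := hv.exists_mem_seminorm_eq_one hv_ge hV hx₀.1 hx₀.2
  refine csSup_eq_of_forall_le_of_forall_lt_exists_gt
    ⟨_, x, ⟨hxV, hx.le⟩, x, ⟨hxV, hx.le⟩, rfl⟩ ?_ fun r hr => ?_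
  · rintro _ ⟨a, ⟨-, ha⟩, b, ⟨-, hb⟩, rfl⟩
    exact (map_sub_le_add N a b).trans ((add_le_add ha hb).trans_eq one_add_one_eq_two)
  · obtain ⟨u, hu, hball, hfar⟩ := hN x hx (2 - r) (sub_pos.2 hr)
    obtain ⟨k, hk⟩ := (hu.eventually_add_mem hV hxV).exists
    refine ⟨_, ⟨x + u k, ⟨hk, hball k⟩, x, ⟨hxV, hx.le⟩, rfl⟩, ?_⟩
    simpa using hfar k

lemma HasDiametralSequences.hasLD2PPlus (hN : HasDiametralSequences N) : HasLD2PPlus N := by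
  intro f hf ε _ δ hδ x _ hfx hx
  obtain ⟨u, hu, hball, hfar⟩ := hN x hx δ hδ
  have hlim : Tendsto (fun k => f (x + u k)) atTop (𝓝 (f x)) := by
    simpa using (hu f ⟨1, by simpa using hf.1⟩).const_add (f x)
  obtain ⟨k, hk⟩ := (hlim.eventually_const_lt hfx).exists
  refine ⟨x + u k, hball k, hk, ?_⟩
  simpa using hfar k

end RotundityAndDiameter

section WeightedL2

variable {ι E : Type*} [AddCommGroup E] [Module ℝ E]

lemma sqrt_tsum_weighted_add_sq_le {w : ι → ℝ} (hw : ∀ i, 0 ≤ w i) {a b : ι → ℝ}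
    (ha : ∀ i, 0 ≤ a i) (hb : ∀ i, 0 ≤ b i) (hsa : Summable fun i => w i * a i ^ 2)
    (hsb : Summable fun i => w i * b i ^ 2) :
    Summable (fun i => w i * (a i + b i) ^ 2) ∧
      √(∑' i, w i * (a i + b i) ^ 2) ≤ √(∑' i, w i * a i ^ 2) + √(∑' i, w i * b i ^ 2) := by
  have hsq (c : ι → ℝ) (i : ι) : (√(w i) * c i) ^ (2 : ℝ) = w i * c i ^ 2 := by
    rw [Real.rpow_two, mul_pow, Real.sq_sqrt (hw i)]
  have minkowski := Real.Lp_add_le_tsum_of_nonneg (p := 2) one_le_two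
    (f := fun i => √(w i) * a i) (g := fun i => √(w i) * b i)
    (fun i => mul_nonneg (Real.sqrt_nonneg _) (ha i))
    (fun i => mul_nonneg (Real.sqrt_nonneg _) (hb i))
    (by simpa only [hsq] using hsa) (by simpa only [hsq] using hsb)
  simpa only [← mul_add, hsq a, hsq b, hsq fun i => a i + b i, ← Real.sqrt_eq_rpow] using minkowski

/-- The seminorm `x ↦ (Σᵢ wᵢ pᵢ(x)²)^{1/2}`. -/
noncomputable def weightedL2Seminorm (w : ι → ℝ) (hw : ∀ i, 0 ≤ w i) (p : ι → Seminorm ℝ E)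
    (hp : ∀ x, Summable fun i => w i * p i x ^ 2) : Seminorm ℝ E :=
  Seminorm.of (fun x => √(∑' i, w i * p i x ^ 2))
    (fun x y => by
      obtain ⟨hsum, hle⟩ := sqrt_tsum_weighted_add_sq_le hw (fun i => apply_nonneg (p i) x)
        (fun i => apply_nonneg (p i) y) (hp x) (hp y)
      refine (Real.sqrt_le_sqrt ((hp (x + y)).tsum_le_tsum (fun i => ?_) hsum)).trans hle
      have := hw i
      gcongr
      exact map_add_le_add (p i) x y)
    (fun a x => by
      simp only [map_smul_eq_mul, mul_pow, mul_left_comm _ (‖a‖ ^ 2), tsum_mul_left]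
      rw [Real.sqrt_mul (sq_nonneg _), Real.sqrt_sq (norm_nonneg a)])

variable {w : ι → ℝ} {hw : ∀ i, 0 ≤ w i} {p : ι → Seminorm ℝ E}
  {hp : ∀ x, Summable fun i => w i * p i x ^ 2}

lemma hasSum_weightedL2Seminorm_sq (x : E) :
    HasSum (fun i => w i * p i x ^ 2) (weightedL2Seminorm w hw p hp x ^ 2) := by
  have hsq : weightedL2Seminorm w hw p hp x ^ 2 = ∑' i, w i * p i x ^ 2 :=
    Real.sq_sqrt (tsum_nonneg fun i => mul_nonneg (hw i) (sq_nonneg _))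
  exact hsq ▸ (hp x).hasSum

lemma weightedL2Seminorm_mono {x y : E} (h : ∀ i, p i x ≤ p i y) :
    weightedL2Seminorm w hw p hp x ≤ weightedL2Seminorm w hw p hp y := by
  refine Real.sqrt_le_sqrt ((hp x).tsum_le_tsum (fun i => ?_) (hp y))
  have := hw i
  have := h i
  gcongr

lemma exists_finset_lt_sum_of_lt_weightedL2Seminorm_sq {x : E} {r : ℝ}
    (hr : r < weightedL2Seminorm w hw p hp x ^ 2) :
    ∃ s : Finset ι, r < ∑ i ∈ s, w i * p i x ^ 2 :=
  ((hasSum_weightedL2Seminorm_sq x).eventually_const_lt hr).exists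

lemma sum_le_weightedL2Seminorm_sq (s : Finset ι) (x : E) :
    ∑ i ∈ s, w i * p i x ^ 2 ≤ weightedL2Seminorm w hw p hp x ^ 2 :=
  sum_le_hasSum s (fun i _ => mul_nonneg (hw i) (sq_nonneg _)) (hasSum_weightedL2Seminorm_sq x)

lemma seminorm_sub_sq_le_parallelogram_defect (q : Seminorm ℝ E) (x y : E) :
    (q (x + y) - q x) ^ 2 ≤ q (x + y) ^ 2 + q (x - y) ^ 2 - 2 * q x ^ 2 := by
  have midpoint : 2 * q x ≤ q (x + y) + q (x - y) := by
    have h := map_add_le_add q (x + y) (x - y)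
    rwa [add_add_sub_cancel, ← two_smul ℝ x, map_smul_eq_mul, Real.norm_two] at h
  nlinarith [sq_nonneg (q (x - y) - q x), mul_le_mul_of_nonneg_left midpoint (apply_nonneg q x)]

lemma weight_mul_seminorm_sub_sq_le_parallelogram_defect (i : ι) (x y : E) :
    w i * (p i (x + y) - p i x) ^ 2 ≤ weightedL2Seminorm w hw p hp (x + y) ^ 2 +
      weightedL2Seminorm w hw p hp (x - y) ^ 2 - 2 * weightedL2Seminorm w hw p hp x ^ 2 := by
  have hsq (z : E) := hasSum_weightedL2Seminorm_sq (hw := hw) (hp := hp) z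
  have hsum := ((hsq (x + y)).add (hsq (x - y))).sub ((hsq x).mul_left 2)
  simp only [← mul_add, ← mul_sub, mul_left_comm (2 : ℝ)] at hsum
  have hdefect (j : ι) := seminorm_sub_sq_le_parallelogram_defect (p j) x y
  calc w i * (p i (x + y) - p i x) ^ 2
      ≤ w i * (p i (x + y) ^ 2 + p i (x - y) ^ 2 - 2 * p i x ^ 2) :=
        mul_le_mul_of_nonneg_left (hdefect i) (hw i)
    _ ≤ _ := le_hasSum hsum i fun j _ => mul_nonneg (hw j) ((sq_nonneg _).trans (hdefect j))

lemma tendsto_seminorm_add_of_tendsto_weightedL2Seminorm {α : Type*} {l : Filter α} {i : ι}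
    (hwi : 0 < w i) {x : E} {y : α → E}
    (hadd : Tendsto (fun k => weightedL2Seminorm w hw p hp (x + y k)) l
      (𝓝 (weightedL2Seminorm w hw p hp x)))
    (hsub : Tendsto (fun k => weightedL2Seminorm w hw p hp (x - y k)) l
      (𝓝 (weightedL2Seminorm w hw p hp x))) :
    Tendsto (fun k => p i (x + y k)) l (𝓝 (p i x)) := by
  have hdefect := (((hadd.pow 2).add (hsub.pow 2)).sub_const
    (2 * weightedL2Seminorm w hw p hp x ^ 2)).div_const (w i)
  rw [← two_mul, sub_self, zero_div] at hdefect
  have hsq : Tendsto (fun k => (p i (x + y k) - p i x) ^ 2) l (𝓝 0) := by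
    refine squeeze_zero (fun k => sq_nonneg _) (fun k => ?_) hdefect
    rw [le_div_iff₀' hwi]
    exact weight_mul_seminorm_sub_sq_le_parallelogram_defect i x (y k)
  refine tendsto_sub_nhds_zero_iff.1 ((tendsto_zero_iff_abs_tendsto_zero _).2 ?_)
  simpa [Function.comp_def, Real.sqrt_sq_eq_abs] using hsq.sqrt

end WeightedL2

section SupSeminorm

variable {K : Type*} [TopologicalSpace K] [CompactSpace K]

lemma bddAbove_range_abs_restrict (U : Set K) (x : C(K, ℝ)) :
    BddAbove (range fun d : U => |x d|) :=
  ⟨‖x‖, forall_mem_range.2 fun d => x.norm_coe_le_norm d⟩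

/-- The seminorm `x ↦ sup_{d ∈ U} |x d|` on `C(K)`; it is `0` when `U` is empty. -/
noncomputable def supSeminormOn (U : Set K) : Seminorm ℝ C(K, ℝ) :=
  Seminorm.of (fun x => ⨆ d : U, |x d|)
    (fun x y => Real.iSup_le
      (fun d => (abs_add_le (x d) (y d)).trans
        (add_le_add (le_ciSup (bddAbove_range_abs_restrict U x) d)
          (le_ciSup (bddAbove_range_abs_restrict U y) d)))
      (add_nonneg (Real.iSup_nonneg fun _ => abs_nonneg _)
        (Real.iSup_nonneg fun _ => abs_nonneg _)))
    (fun a x => by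
      rw [Real.norm_eq_abs, Real.mul_iSup_of_nonneg (abs_nonneg a)]
      simp only [ContinuousMap.smul_apply, smul_eq_mul, abs_mul])

variable {U : Set K} {x y : C(K, ℝ)}

lemma abs_apply_le_supSeminormOn (x : C(K, ℝ)) {d : K} (hd : d ∈ U) :
    |x d| ≤ supSeminormOn U x :=
  le_ciSup (bddAbove_range_abs_restrict U x) ⟨d, hd⟩

lemma supSeminormOn_le {r : ℝ} (hr : 0 ≤ r) (h : ∀ d ∈ U, |x d| ≤ r) : supSeminormOn U x ≤ r :=
  Real.iSup_le (fun d => h d d.2) hr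

lemma supSeminormOn_mono (h : ∀ d ∈ U, |x d| ≤ |y d|) : supSeminormOn U x ≤ supSeminormOn U y :=
  supSeminormOn_le (apply_nonneg _ y) fun d hd => (h d hd).trans (abs_apply_le_supSeminormOn y hd)

lemma supSeminormOn_le_norm (U : Set K) (x : C(K, ℝ)) : supSeminormOn U x ≤ ‖x‖ :=
  supSeminormOn_le (norm_nonneg x) fun d _ => x.norm_coe_le_norm d

lemma exists_isOpen_subset_forall_mul_supSeminormOn_le_abs (hU : IsOpen U) (hne : U.Nonempty)
    (x : C(K, ℝ)) {c : ℝ} (hc : c < 1) :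
    ∃ V ⊆ U, IsOpen V ∧ V.Nonempty ∧ ∀ d ∈ V, c * supSeminormOn U x ≤ |x d| := by
  rcases (apply_nonneg (supSeminormOn U) x).eq_or_lt with hzero | hpos
  · exact ⟨U, Subset.rfl, hU, hne, fun d _ => by simp [← hzero]⟩
  · have := hne.to_subtype
    obtain ⟨d, hd⟩ : ∃ d : U, c * supSeminormOn U x < |x d| :=
      exists_lt_of_lt_ciSup (mul_lt_of_lt_one_left hpos hc)
    exact ⟨U ∩ {d | c * supSeminormOn U x < |x d|}, inter_subset_left,
      hU.inter (isOpen_lt continuous_const (by fun_prop)), ⟨d, d.2, hd⟩, fun e he => he.2.le⟩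

lemma abs_add_abs_le_of_abs_add_le_of_abs_sub_le {a b r : ℝ} (hadd : |a + b| ≤ r)
    (hsub : |a - b| ≤ r) : |a| + |b| ≤ r := by
  grind

lemma tendsto_zero_of_tendsto_supSeminormOn_add_sub {α ι : Type*} {l : Filter α} {D : ι → Set K}
    (hbasis : TopologicalSpace.IsTopologicalBasis (range D)) {x : C(K, ℝ)} {y : α → C(K, ℝ)}
    (hadd : ∀ i, Tendsto (fun k => supSeminormOn (D i) (x + y k)) l (𝓝 (supSeminormOn (D i) x)))
    (hsub : ∀ i, Tendsto (fun k => supSeminormOn (D i) (x - y k)) l (𝓝 (supSeminormOn (D i) x))) :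
    Tendsto y l (𝓝 0) := by
  rw [ContinuousMap.tendsto_iff_tendstoLocallyUniformly, Metric.tendstoLocallyUniformly_iff]
  intro ε hε t
  have hosc : {d | |x d - x t| < ε / 4} ∈ 𝓝 t :=
    (isOpen_lt (by fun_prop) continuous_const).mem_nhds (by simpa using hε)
  obtain ⟨_, ⟨i, rfl⟩, hti, hi⟩ := hbasis.mem_nhds_iff.1 hosc
  refine ⟨D i, (hbasis.isOpen ⟨i, rfl⟩).mem_nhds hti, ?_⟩
  have hsup (d : K) (hd : d ∈ D i) : supSeminormOn (D i) x ≤ |x d| + ε / 2 := by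
    refine supSeminormOn_le (by positivity) fun e he => ?_
    have hxd : |x d - x t| < ε / 4 := hi hd
    have hxe : |x e - x t| < ε / 4 := hi he
    grind
  have hε' : supSeminormOn (D i) x < supSeminormOn (D i) x + ε / 2 := by linarith
  filter_upwards [(hadd i).eventually_lt_const hε', (hsub i).eventually_lt_const hε']
    with k hadd_k hsub_k d hd
  have hxy : |x d| + |y k d| < supSeminormOn (D i) x + ε / 2 :=
    (abs_add_abs_le_of_abs_add_le_of_abs_sub_le
      ((abs_apply_le_supSeminormOn (x + y k) hd).trans (le_max_left _ _))
      ((abs_apply_le_supSeminormOn (x - y k) hd).trans (le_max_right _ _))).trans_lt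
      (max_lt hadd_k hsub_k)
  rw [ContinuousMap.zero_apply, dist_zero_left, Real.norm_eq_abs]
  linarith [hsup d hd]

end SupSeminorm

section DisjointSupports

variable {K ι : Type*} [TopologicalSpace K] [CompactSpace K]

lemma norm_sum_le_of_pairwise_mul_eq_zero {u : ι → C(K, ℝ)} {M : ℝ} (hM : 0 ≤ M)
    (hu : ∀ i, ‖u i‖ ≤ M) (hdisj : Pairwise fun i j => u i * u j = 0) (s : Finset ι) :
    ‖∑ i ∈ s, u i‖ ≤ M := by
  refine (ContinuousMap.norm_le _ hM).2 fun t => ?_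
  rw [ContinuousMap.sum_apply]
  by_cases h : ∃ i ∈ s, u i t ≠ 0
  · obtain ⟨i, hi, hit⟩ := h
    have hother (j : ι) (hj : j ≠ i) : u j t = 0 :=
      (mul_eq_zero.1 (DFunLike.congr_fun (hdisj hj) t)).resolve_right hit
    rw [Finset.sum_eq_single_of_mem i hi fun j _ hj => hother j hj]
    exact (ContinuousMap.norm_coe_le_norm _ t).trans (hu i)
  · push Not at h
    simpa [Finset.sum_eq_zero h] using hM

lemma summable_abs_apply_of_pairwise_mul_eq_zero (f : StrongDual ℝ C(K, ℝ)) {u : ι → C(K, ℝ)}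
    {M : ℝ} (hM : 0 ≤ M) (hu : ∀ i, ‖u i‖ ≤ M) (hdisj : Pairwise fun i j => u i * u j = 0) :
    Summable fun i => |f (u i)| := by
  refine summable_of_sum_le (c := ‖f‖ * M) (fun i => abs_nonneg _) fun s => ?_
  let v : ι → C(K, ℝ) := fun i => (SignType.sign (f (u i)) : ℝ) • u i
  have hv (i : ι) : ‖v i‖ ≤ M := by
    have hsign : ‖(SignType.sign (f (u i)) : ℝ)‖ ≤ 1 := by
      rcases SignType.sign (f (u i)) with _ | _ | _ <;> simp
    rw [norm_smul]
    exact (mul_le_of_le_one_left (norm_nonneg _) hsign).trans (hu i)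
  have hvdisj : Pairwise fun i j => v i * v j = 0 := fun i j hij => by
    simp [v, hdisj hij]
  calc ∑ i ∈ s, |f (u i)| = f (∑ i ∈ s, v i) := by
        simp only [v, map_sum, map_smul, smul_eq_mul, sign_mul_self]
    _ ≤ ‖f‖ * ‖∑ i ∈ s, v i‖ := (le_abs_self _).trans (f.le_opNorm _)
    _ ≤ ‖f‖ * M := by gcongr; exact norm_sum_le_of_pairwise_mul_eq_zero hM hv hvdisj s

lemma weaklyNull_of_pairwise_mul_eq_zero {N : Seminorm ℝ C(K, ℝ)} {C : ℝ}
    (hN : ∀ x, N x ≤ C * ‖x‖) {u : ℕ → C(K, ℝ)} {M : ℝ} (hu : ∀ k, ‖u k‖ ≤ M)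
    (hdisj : Pairwise fun k l => u k * u l = 0) : WeaklyNull N u := by
  rintro f ⟨c, hf⟩
  have hbound (x : C(K, ℝ)) : ‖f x‖ ≤ |c| * C * ‖x‖ :=
    calc |f x| ≤ |c| * N x := (hf x).trans (by gcongr; exact le_abs_self c)
      _ ≤ |c| * C * ‖x‖ := by rw [mul_assoc]; gcongr; exact hN x
  have hsum := summable_abs_apply_of_pairwise_mul_eq_zero (f.mkContinuous _ hbound)
    ((norm_nonneg _).trans (hu 0)) hu hdisj
  exact (tendsto_zero_iff_abs_tendsto_zero _).2 hsum.tendsto_atTop_zero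

end DisjointSupports

section Bumps

variable {K ι : Type*}

lemma exists_injective_forall_mem_of_infinite [Finite ι] {S : ι → Set K}
    (hS : ∀ i, (S i).Infinite) : ∃ p : ι → K, Function.Injective p ∧ ∀ i, p i ∈ S i := by
  classical
  have := Fintype.ofFinite ι
  choose t htS htcard using fun i => (hS i).exists_subset_card_eq (Fintype.card ι)
  have hall (s : Finset ι) : s.card ≤ (s.biUnion t).card := by
    obtain rfl | ⟨i, hi⟩ := s.eq_empty_or_nonempty
    · simp
    · calc s.card ≤ (t i).card := (htcard i).symm ▸ s.card_le_univ
        _ ≤ (s.biUnion t).card := Finset.card_le_card (Finset.subset_biUnion_of_mem t hi)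
  obtain ⟨p, hp, hpt⟩ := (Finset.all_card_le_biUnion_card_iff_exists_injective t).1 hall
  exact ⟨p, hp, fun i => htS i (hpt i)⟩

variable [TopologicalSpace K] [PerfectSpace K]

lemma infinite_of_isOpen [T1Space K] {U : Set K} (hU : IsOpen U) (hne : U.Nonempty) :
    U.Infinite :=
  let ⟨x, hx⟩ := hne
  infinite_of_mem_nhds x (hU.mem_nhds hx)

lemma exists_isOpen_subset_pairwise_disjoint [T2Space K] [Finite ι] {U : ι → Set K}
    (hU : ∀ i, IsOpen (U i)) (hne : ∀ i, (U i).Nonempty) :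
    ∃ V : ι → Set K, (∀ i, V i ⊆ U i) ∧ (∀ i, IsOpen (V i)) ∧ (∀ i, (V i).Nonempty) ∧
      Pairwise (Function.onFun Disjoint V) := by
  obtain ⟨p, hp, hpU⟩ :=
    exists_injective_forall_mem_of_infinite fun i => infinite_of_isOpen (hU i) (hne i)
  obtain ⟨W, hW, hdisj⟩ := (finite_range p).t2_separation
  refine ⟨fun i => U i ∩ W (p i), fun i => inter_subset_left, fun i => (hU i).inter (hW _).2,
    fun i => ⟨p i, hpU i, (hW _).1⟩, fun i j hij => ?_⟩
  exact (hdisj (mem_range_self i) (mem_range_self j) (hp.ne hij)).mono inter_subset_right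
    inter_subset_right

lemma exists_seq_isOpen_subset_pairwise_disjoint [T2Space K] {U : Set K} (hU : IsOpen U)
    (hne : U.Nonempty) :
    ∃ V : ℕ → Set K, (∀ k, V k ⊆ U) ∧ (∀ k, IsOpen (V k)) ∧ (∀ k, (V k).Nonempty) ∧
      Pairwise (Function.onFun Disjoint V) := by
  have := (infinite_of_isOpen hU hne).to_subtype
  obtain ⟨V, hinf, hopen, hdisj⟩ := exists_seq_infinite_isOpen_pairwise_disjoint U
  exact ⟨fun k => (↑) '' V k, fun k => Subtype.coe_image_subset U (V k),
    fun k => hU.isOpenMap_subtype_val _ (hopen k), fun k => (hinf k).nonempty.image _,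
    fun k l hkl => disjoint_image_of_injective Subtype.val_injective (hdisj hkl)⟩

lemma exists_seq_isOpen_pairwise_disjoint_inter_nonempty [T2Space K] [Finite ι] {U : ι → Set K}
    (hU : ∀ i, IsOpen (U i)) (hne : ∀ i, (U i).Nonempty) :
    ∃ V : ℕ → Set K, (∀ k, IsOpen (V k)) ∧ Pairwise (Function.onFun Disjoint V) ∧
      ∀ k i, (V k ∩ U i).Nonempty := by
  obtain ⟨W, hWU, hWopen, hWne, hWdisj⟩ := exists_isOpen_subset_pairwise_disjoint hU hne
  choose V hVW hVopen hVne hVdisj using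
    fun i => exists_seq_isOpen_subset_pairwise_disjoint (hWopen i) (hWne i)
  refine ⟨fun k => ⋃ i, V i k, fun k => isOpen_iUnion fun i => hVopen i k, fun k l hkl => ?_,
    fun k i => ?_⟩
  · refine disjoint_iUnion_left.2 fun i => disjoint_iUnion_right.2 fun j => ?_
    obtain rfl | hij := eq_or_ne i j
    · exact hVdisj i hkl
    · exact (hWdisj hij).mono (hVW i k) (hVW j l)
  · obtain ⟨d, hd⟩ := hVne i k
    exact ⟨d, mem_iUnion.2 ⟨i, hd⟩, hWU i (hVW i k hd)⟩

lemma exists_seq_bump_pairwise_mul_eq_zero [T4Space K] [Finite ι] {U : ι → Set K}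
    (hU : ∀ i, IsOpen (U i)) (hne : ∀ i, (U i).Nonempty) :
    ∃ φ : ℕ → C(K, ℝ), (∀ k t, φ k t ∈ Icc (0 : ℝ) 1) ∧ (Pairwise fun k l => φ k * φ l = 0) ∧
      ∀ k i, ∃ d ∈ U i, φ k d = 1 := by
  obtain ⟨V, hVopen, hVdisj, hVU⟩ := exists_seq_isOpen_pairwise_disjoint_inter_nonempty hU hne
  choose d hdV hdU using hVU
  choose φ hzero hone hmem using fun k =>
    exists_continuous_zero_one_of_isClosed (hVopen k).isClosed_compl (finite_range (d k)).isClosed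
      (disjoint_compl_left_iff_subset.2 (range_subset_iff.2 (hdV k)))
  refine ⟨φ, hmem, fun k l hkl => ?_, fun k i => ⟨d k i, hdU k i, hone k (mem_range_self i)⟩⟩
  ext t
  by_cases ht : t ∈ V k
  · simp [hzero l (disjoint_left.1 (hVdisj hkl) ht)]
  · simp [hzero k ht]

end Bumps

section L2SupSeminorm

variable {K ι : Type*} [TopologicalSpace K] [CompactSpace K]

lemma summable_weight_mul_supSeminormOn_sq {w : ι → ℝ} (hw : ∀ i, 0 ≤ w i) (hws : Summable w)
    (D : ι → Set K) (x : C(K, ℝ)) : Summable fun i => w i * supSeminormOn (D i) x ^ 2 := by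
  refine .of_nonneg_of_le (fun i => mul_nonneg (hw i) (sq_nonneg _)) (fun i => ?_)
    (hws.mul_right (‖x‖ ^ 2))
  have := hw i
  gcongr
  exact supSeminormOn_le_norm (D i) x

/-- The norm `‖x‖_D = (Σᵢ wᵢ sup_{d ∈ Dᵢ} |x d|²)^{1/2}` on `C(K)`, for positive summable
weights. -/
noncomputable def l2SupSeminorm (w : ι → ℝ) (hw : ∀ i, 0 < w i) (hws : Summable w)
    (D : ι → Set K) : Seminorm ℝ C(K, ℝ) :=
  weightedL2Seminorm w (fun i => (hw i).le) (fun i => supSeminormOn (D i))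
    (summable_weight_mul_supSeminormOn_sq (fun i => (hw i).le) hws D)

variable {w : ι → ℝ} {hw : ∀ i, 0 < w i} {hws : Summable w} {D : ι → Set K}

lemma l2SupSeminorm_mono {x y : C(K, ℝ)} (h : ∀ t, |x t| ≤ |y t|) :
    l2SupSeminorm w hw hws D x ≤ l2SupSeminorm w hw hws D y :=
  weightedL2Seminorm_mono fun _ => supSeminormOn_mono fun d _ => h d

lemma l2SupSeminorm_le_mul_norm (x : C(K, ℝ)) :
    l2SupSeminorm w hw hws D x ≤ √(∑' i, w i) * ‖x‖ := by
  refine Real.sqrt_le_iff.2 ⟨by positivity, ?_⟩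
  rw [mul_pow, Real.sq_sqrt (tsum_nonneg fun i => (hw i).le), ← tsum_mul_right]
  refine (summable_weight_mul_supSeminormOn_sq (fun i => (hw i).le) hws D x).tsum_le_tsum
    (fun i => ?_) (hws.mul_right _)
  have := (hw i).le
  gcongr
  exact supSeminormOn_le_norm (D i) x

lemma l2SupSeminorm_one_ne_zero [Nonempty ι] (hne : ∀ i, (D i).Nonempty) :
    l2SupSeminorm w hw hws D 1 ≠ 0 := by
  obtain ⟨i⟩ := ‹Nonempty ι›
  obtain ⟨d, hd⟩ := hne i
  have hone : 1 ≤ supSeminormOn (D i) 1 := by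
    simpa using abs_apply_le_supSeminormOn (1 : C(K, ℝ)) hd
  have hle : w i * supSeminormOn (D i) 1 ^ 2 ≤ l2SupSeminorm w hw hws D 1 ^ 2 := by
    simpa only [Finset.sum_singleton] using! sum_le_weightedL2Seminorm_sq
      (hp := summable_weight_mul_supSeminormOn_sq (fun j => (hw j).le) hws D) {i} (1 : C(K, ℝ))
  have hpos : 0 < w i * supSeminormOn (D i) 1 ^ 2 :=
    mul_pos (hw i) (pow_pos (one_pos.trans_le hone) 2)
  exact fun hzero => (hpos.trans_le hle).ne' (by simp [hzero])

lemma tendsto_supSeminormOn_add_of_tendsto_l2SupSeminorm {α : Type*} {l : Filter α}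
    {x : C(K, ℝ)} {y : α → C(K, ℝ)}
    (hadd : Tendsto (fun k => l2SupSeminorm w hw hws D (x + y k)) l
      (𝓝 (l2SupSeminorm w hw hws D x)))
    (hsub : Tendsto (fun k => l2SupSeminorm w hw hws D (x - y k)) l
      (𝓝 (l2SupSeminorm w hw hws D x))) (i : ι) :
    Tendsto (fun k => supSeminormOn (D i) (x + y k)) l (𝓝 (supSeminormOn (D i) x)) :=
  tendsto_seminorm_add_of_tendsto_weightedL2Seminorm (hw i) hadd hsub

theorem isMLUR_l2SupSeminorm (hbasis : TopologicalSpace.IsTopologicalBasis (range D)) :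
    IsMLUR (l2SupSeminorm w hw hws D) := by
  intro x hx y hadd hsub
  rw [← hx] at hadd hsub
  have hsup_sub (i : ι) :
      Tendsto (fun k => supSeminormOn (D i) (x - y k)) atTop (𝓝 (supSeminormOn (D i) x)) := by
    simpa only [sub_eq_add_neg] using
      tendsto_supSeminormOn_add_of_tendsto_l2SupSeminorm (y := fun k => -y k)
        (by simpa only [← sub_eq_add_neg] using hsub) (by simpa only [sub_neg_eq_add] using hadd) i
  have hy : Tendsto y atTop (𝓝 0) := tendsto_zero_of_tendsto_supSeminormOn_add_sub hbasis
    (tendsto_supSeminormOn_add_of_tendsto_l2SupSeminorm hadd hsub) hsup_sub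
  have hnorm : Tendsto (fun k => √(∑' i, w i) * ‖y k‖) atTop (𝓝 0) := by
    simpa using hy.norm.const_mul √(∑' i, w i)
  exact squeeze_zero (fun k => apply_nonneg _ _) (fun k => l2SupSeminorm_le_mul_norm _) hnorm

lemma lt_l2SupSeminorm_of_lt_sum {x y : C(K, ℝ)} {s : Finset ι} {c r : ℝ} (hc : 0 ≤ c)
    (hr : r ^ 2 < c ^ 2 * ∑ i ∈ s, w i * supSeminormOn (D i) x ^ 2)
    (hy : ∀ i ∈ s, c * supSeminormOn (D i) x ≤ supSeminormOn (D i) y) :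
    r < l2SupSeminorm w hw hws D y := by
  refine lt_of_pow_lt_pow_left₀ 2 (apply_nonneg _ y) ?_
  calc r ^ 2 < ∑ i ∈ s, w i * (c * supSeminormOn (D i) x) ^ 2 := by
        simpa only [Finset.mul_sum, mul_pow, mul_left_comm (c ^ 2)] using hr
    _ ≤ ∑ i ∈ s, w i * supSeminormOn (D i) y ^ 2 := by
        refine Finset.sum_le_sum fun i hi => mul_le_mul_of_nonneg_left ?_ (hw i).le
        exact pow_le_pow_left₀ (mul_nonneg hc (apply_nonneg _ x)) (hy i hi) 2
    _ ≤ l2SupSeminorm w hw hws D y ^ 2 := sum_le_weightedL2Seminorm_sq s y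

lemma exists_seq_bump_lt_l2SupSeminorm_mul [T2Space K] [PerfectSpace K]
    (hopen : ∀ i, IsOpen (D i)) (hne : ∀ i, (D i).Nonempty) {x : C(K, ℝ)} {r : ℝ} (hr : 0 ≤ r)
    (hx : r < l2SupSeminorm w hw hws D x) :
    ∃ φ : ℕ → C(K, ℝ), (∀ k t, φ k t ∈ Icc (0 : ℝ) 1) ∧ (Pairwise fun k l => φ k * φ l = 0) ∧
      ∀ k, r < l2SupSeminorm w hw hws D (x * φ k) := by
  obtain ⟨s, hs⟩ : ∃ s : Finset ι, r ^ 2 < ∑ i ∈ s, w i * supSeminormOn (D i) x ^ 2 :=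
    exists_finset_lt_sum_of_lt_weightedL2Seminorm_sq (pow_lt_pow_left₀ hx hr two_ne_zero)
  obtain ⟨c, hrc, hc_pos, hc_lt⟩ :
      ∃ c : ℝ, r ^ 2 < c ^ 2 * ∑ i ∈ s, w i * supSeminormOn (D i) x ^ 2 ∧ 0 < c ∧ c < 1 := by
    have hlim : Tendsto (fun c : ℝ => c ^ 2 * ∑ i ∈ s, w i * supSeminormOn (D i) x ^ 2) (𝓝[<] 1)
        (𝓝 (∑ i ∈ s, w i * supSeminormOn (D i) x ^ 2)) :=
      (Continuous.tendsto' (by fun_prop) _ _ (by simp)).mono_left nhdsWithin_le_nhds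
    exact ((hlim.eventually_const_lt hs).and (Ioo_mem_nhdsLT one_pos)).exists
  choose V hVD hVopen hVne hVx using fun i =>
    exists_isOpen_subset_forall_mul_supSeminormOn_le_abs (hopen i) (hne i) x hc_lt
  obtain ⟨φ, hφ, hdisj, hone⟩ := exists_seq_bump_pairwise_mul_eq_zero
    (fun i : s => hVopen i) (fun i : s => hVne i)
  refine ⟨φ, hφ, hdisj, fun k => lt_l2SupSeminorm_of_lt_sum hc_pos.le hrc fun i hi => ?_⟩
  obtain ⟨d, hd, hφd⟩ := hone k ⟨i, hi⟩
  calc c * supSeminormOn (D i) x ≤ |x d| := hVx i d hd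
    _ = |(x * φ k) d| := by rw [ContinuousMap.mul_apply, hφd, mul_one]
    _ ≤ supSeminormOn (D i) (x * φ k) := abs_apply_le_supSeminormOn _ (hVD i hd)

theorem hasDiametralSequences_l2SupSeminorm [T2Space K] [PerfectSpace K]
    (hopen : ∀ i, IsOpen (D i)) (hne : ∀ i, (D i).Nonempty) :
    HasDiametralSequences (l2SupSeminorm w hw hws D) := by
  intro x hx δ hδ
  obtain ⟨φ, hφ, hdisj, hfar⟩ := exists_seq_bump_lt_l2SupSeminorm_mul (hw := hw) (hws := hws)
    hopen hne (x := x) (le_max_left 0 (1 - δ / 2)) (hx.symm ▸ max_lt one_pos (by linarith))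
  refine ⟨fun k => (-2 : ℝ) • (x * φ k), ?_, fun k => ?_, fun k => ?_⟩
  · refine weaklyNull_of_pairwise_mul_eq_zero l2SupSeminorm_le_mul_norm (M := 2 * ‖x‖)
      (fun k => ?_) fun k l hkl => ?_
    · have hφ_norm : ‖φ k‖ ≤ 1 := (ContinuousMap.norm_le _ zero_le_one).2 fun t =>
        (Real.norm_of_nonneg (hφ k t).1).trans_le (hφ k t).2
      rw [norm_smul, norm_neg, Real.norm_two]
      gcongr
      exact (norm_mul_le x (φ k)).trans (mul_le_of_le_one_right (norm_nonneg x) hφ_norm)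
    · simp [mul_mul_mul_comm x (φ k), hdisj hkl]
  · refine (l2SupSeminorm_mono fun t => ?_).trans hx.le
    have hflip : |1 - 2 * φ k t| ≤ 1 :=
      abs_le.2 ⟨by linarith [(hφ k t).2], by linarith [(hφ k t).1]⟩
    calc |(x + (-2 : ℝ) • (x * φ k)) t| = |x t| * |1 - 2 * φ k t| := by
          rw [← abs_mul, ContinuousMap.add_apply, ContinuousMap.smul_apply,
            ContinuousMap.mul_apply, smul_eq_mul]
          ring_nf
      _ ≤ |x t| := mul_le_of_le_one_right (abs_nonneg _) hflip
  · rw [map_smul_eq_mul, norm_neg, Real.norm_two]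
    linarith [hfar k, le_max_right 0 (1 - δ / 2)]

end L2SupSeminorm

theorem normD_MLUR_D2P_LD2P_plus_general {K ι : Type*} [TopologicalSpace K] [CompactSpace K]
    [T2Space K] [PerfectSpace K] [Nonempty K] (w : ι → ℝ) (hw : ∀ i, 0 < w i) (hws : Summable w)
    (D : ι → Set K) (hDne : ∀ i, (D i).Nonempty)
    (hbasis : TopologicalSpace.IsTopologicalBasis (range D)) :
    IsMLUR (l2SupSeminorm w hw hws D) ∧ HasD2P (l2SupSeminorm w hw hws D) ∧
      HasLD2PPlus (l2SupSeminorm w hw hws D) := by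
  have hopen (i : ι) : IsOpen (D i) := hbasis.isOpen ⟨i, rfl⟩
  obtain ⟨_, ⟨i, rfl⟩, -⟩ :=
    hbasis.exists_subset_of_mem_open (mem_univ (Classical.arbitrary K)) isOpen_univ
  have : Nonempty ι := ⟨i⟩
  have hdiam := hasDiametralSequences_l2SupSeminorm (hw := hw) (hws := hws) hopen hDne
  exact ⟨isMLUR_l2SupSeminorm hbasis, hdiam.hasD2P ⟨1, l2SupSeminorm_one_ne_zero hDne⟩,
    hdiam.hasLD2PPlus⟩

/-- For any base `D` of nonempty open sets of `[0,1]`, the space `X_D = (C[0,1], ‖·‖_D)`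
is MLUR, has the diameter 2 property and has the local diameter 2 property +. -/
theorem normD_MLUR_D2P_LD2P_plus (D : ℕ → Set (Icc (0:ℝ) 1))
    (hDopen : ∀ n, IsOpen (D n)) (hDne : ∀ n, (D n).Nonempty)
    (hbasis : TopologicalSpace.IsTopologicalBasis (Set.range D)) :
    -- MLUR
    (∀ x : C(Icc (0:ℝ) 1, ℝ), normD D x = 1 →
      ∀ y : ℕ → C(Icc (0:ℝ) 1, ℝ),
        Tendsto (fun k => normD D (x + y k)) atTop (𝓝 1) →
        Tendsto (fun k => normD D (x - y k)) atTop (𝓝 1) →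
        Tendsto (fun k => normD D (y k)) atTop (𝓝 0)) ∧
    -- D2P: every nonempty relatively weakly open subset of the unit ball has diameter 2
    (∀ W : Set C(Icc (0:ℝ) 1, ℝ), W.Nonempty →
      (∃ V : Set C(Icc (0:ℝ) 1, ℝ), IsOpen[weakTopD D] V ∧
        W = V ∩ {x | normD D x ≤ 1}) →
      sSup {r : ℝ | ∃ a ∈ W, ∃ b ∈ W, r = normD D (a - b)} = 2) ∧
    -- LD2P+
    (∀ f : C(Icc (0:ℝ) 1, ℝ) →ₗ[ℝ] ℝ, DualNormOneD D f →
      ∀ ε : ℝ, 0 < ε → ∀ δ : ℝ, 0 < δ →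
        ∀ x : C(Icc (0:ℝ) 1, ℝ), normD D x ≤ 1 → f x > 1 - ε → normD D x = 1 →
          ∃ y : C(Icc (0:ℝ) 1, ℝ), normD D y ≤ 1 ∧ f y > 1 - ε ∧
            normD D (x - y) > 2 - δ) := by
  -- `normD D` unfolds to `l2SupSeminorm` with weights `(1 / 2) ^ (n + 1)`: indices start at `0`.
  exact normD_MLUR_D2P_LD2P_plus_general (fun n => (1 / 2 : ℝ) ^ (n + 1)) (fun n => by positivity)
    ((summable_nat_add_iff 1).2 summable_geometric_two) D hDne hbasis
end

section
/- Let D = (D_n)_{n=1}^∞ be a sequence of nonempty open subsets of [0,1] forming a base for the topology of [0,1], let t ∈ [0,1], set J(t) = {n : t ∈ D_n} and w(t) = Σ_{n ∈ J(t)} 2^{-n}. If the closure of D_n does not contain t for every n ∉ J(t), then the norm of the evaluation functional δ_t : x ↦ x(t) on X_D = (C[0,1], ‖·‖_D) equals 1/√(w(t)). -/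
open Set Filter Topology
open scoped Classical

/-!
If `t ∈ D i`, then `|x t|` is at most the `i`-th seminorm of `x`; summing squares with weights gives
`|x t| * √w(t) ≤ ‖x‖`. Conversely, `t` lies outside the closures of any finitely many of the sets
`D i` not containing it, so there is a continuous `x` with `|x| ≤ 1` and `x t = 1` that vanishes on
all of these. Its `i`-th seminorm is `1` if `t ∈ D i` and `0` for the finitely many chosen indices.
Letting the finite set of indices grow, `‖x‖ → √w(t)` by dominated convergence, while `x t = 1`.
-/

section SupOn

variable {X : Type*} [TopologicalSpace X] {S : Set X} {x : C(X, ℝ)} {t : X}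

/-- The supremum seminorm `sup_{d ∈ S} |x d|` of a continuous function on a set. It is `0` if `S` is
empty and takes the junk value `0` if `x` is unbounded on `S`. -/
noncomputable def supOn (S : Set X) (x : C(X, ℝ)) : ℝ :=
  ⨆ d : S, |x d|

lemma supOn_nonneg (S : Set X) (x : C(X, ℝ)) : 0 ≤ supOn S x :=
  Real.iSup_nonneg fun _ => abs_nonneg _

lemma supOn_le {C : ℝ} (hC : 0 ≤ C) (hx : ∀ s ∈ S, |x s| ≤ C) : supOn S x ≤ C :=
  Real.iSup_le (fun d => hx d d.2) hC

lemma supOn_smul (S : Set X) (c : ℝ) (x : C(X, ℝ)) : supOn S (c • x) = |c| * supOn S x := by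
  simp only [supOn, ContinuousMap.smul_apply, smul_eq_mul, abs_mul,
    Real.mul_iSup_of_nonneg (abs_nonneg c)]

lemma supOn_eq_zero (hx : EqOn x 0 S) : supOn S x = 0 :=
  le_antisymm (supOn_le le_rfl fun s hs => by simp [hx hs]) (supOn_nonneg S x)

lemma abs_apply_le_supOn {C : ℝ} (hx : ∀ s ∈ S, |x s| ≤ C) (ht : t ∈ S) : |x t| ≤ supOn S x :=
  le_ciSup (f := fun d : S => |x d|) ⟨C, forall_mem_range.2 fun d => hx d d.2⟩ ⟨t, ht⟩

lemma supOn_eq_one (hx : ∀ s ∈ S, |x s| ≤ 1) (ht : t ∈ S) (hxt : x t = 1) : supOn S x = 1 :=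
  le_antisymm (supOn_le zero_le_one hx) (by simpa [hxt] using abs_apply_le_supOn hx ht)

end SupOn

section PointWeight

variable {ι X : Type*} {a : ι → ℝ} {D : ι → Set X} {t : X}

/-- The total weight `w(t)` of the sets `D i` containing `t`. -/
noncomputable def pointWeight (a : ι → ℝ) (D : ι → Set X) (t : X) : ℝ :=
  ∑' i, {i | t ∈ D i}.indicator a i

lemma pointWeight_pos (ha : ∀ i, 0 ≤ a i) (hsum : Summable a) {i : ι} (hi : 0 < a i)
    (ht : t ∈ D i) : 0 < pointWeight a D t :=
  (hsum.indicator _).tsum_pos (indicator_nonneg fun i _ => ha i) i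
    (by rwa [indicator_of_mem (show i ∈ {i | t ∈ D i} from ht)])

end PointWeight

section WeightedSupNorm

variable {ι X : Type*} [TopologicalSpace X] {a : ι → ℝ} {D : ι → Set X} {t : X}

/-- The norm `(∑ᵢ aᵢ (sup_{D i} |x|)²)^{1/2}`, which is `‖x‖_D` when the weights are
`a n = 2^{-(n+1)}`. -/
noncomputable def weightedSupNorm (a : ι → ℝ) (D : ι → Set X) (x : C(X, ℝ)) : ℝ :=
  √(∑' i, a i * supOn (D i) x ^ 2)

lemma weightedSupNorm_smul (a : ι → ℝ) (D : ι → Set X) (c : ℝ) (x : C(X, ℝ)) :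
    weightedSupNorm a D (c • x) = |c| * weightedSupNorm a D x := by
  have hterm (i : ι) : a i * supOn (D i) (c • x) ^ 2 = c ^ 2 * (a i * supOn (D i) x ^ 2) := by
    rw [supOn_smul, mul_pow, sq_abs, mul_left_comm]
  simp only [weightedSupNorm, hterm, tsum_mul_left, Real.sqrt_mul (sq_nonneg c),
    Real.sqrt_sq_eq_abs]

lemma abs_apply_le_mul_weightedSupNorm {M : ℝ}
    (hM : ∀ x : C(X, ℝ), weightedSupNorm a D x ≤ 1 → |x t| ≤ M) {x : C(X, ℝ)}
    (hx : 0 < weightedSupNorm a D x) : |x t| ≤ M * weightedSupNorm a D x := by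
  set c := weightedSupNorm a D x
  have hunit : weightedSupNorm a D (c⁻¹ • x) ≤ 1 := by
    rw [weightedSupNorm_smul, abs_of_pos (inv_pos.2 hx), inv_mul_cancel₀ hx.ne']
  have hscaled : c⁻¹ * |x t| ≤ M := by
    simpa [abs_mul, abs_of_pos hx] using hM _ hunit
  rwa [inv_mul_le_iff₀ hx, mul_comm] at hscaled

lemma tendsto_weightedSupNorm {α : Type*} {l : Filter α} {x : α → C(X, ℝ)} (ha : ∀ i, 0 ≤ a i)
    (hsum : Summable a) (hx : ∀ k s, |x k s| ≤ 1) (hxt : ∀ k, x k t = 1)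
    (hzero : ∀ i, t ∉ D i → ∀ᶠ k in l, EqOn (x k) 0 (D i)) :
    Tendsto (fun k => weightedSupNorm a D (x k)) l (𝓝 √(pointWeight a D t)) := by
  refine (Real.continuous_sqrt.tendsto _).comp <|
    tendsto_tsum_of_dominated_convergence hsum (fun i => ?_) (Eventually.of_forall fun k i => ?_)
  · refine tendsto_const_nhds.congr' ?_
    by_cases ht : t ∈ D i
    · refine Eventually.of_forall fun k => ?_
      simp [ht, supOn_eq_one (fun s _ => hx k s) ht (hxt k)]
    · filter_upwards [hzero i ht] with k hk
      simp [ht, supOn_eq_zero hk]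
  · have hle : supOn (D i) (x k) ≤ 1 := supOn_le zero_le_one fun s _ => hx k s
    rw [Real.norm_of_nonneg (mul_nonneg (ha i) (sq_nonneg _))]
    exact mul_le_of_le_one_right (ha i) (pow_le_one₀ (supOn_nonneg _ _) hle)

section CompactSpace

variable [CompactSpace X]

lemma summable_mul_supOn_sq (ha : ∀ i, 0 ≤ a i) (hsum : Summable a) (x : C(X, ℝ)) :
    Summable fun i => a i * supOn (D i) x ^ 2 := by
  refine .of_nonneg_of_le (fun i => mul_nonneg (ha i) (sq_nonneg _)) (fun i => ?_)
    (hsum.mul_right (‖x‖ ^ 2))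
  have hle : supOn (D i) x ≤ ‖x‖ := supOn_le (norm_nonneg x) fun s _ => x.norm_coe_le_norm s
  exact mul_le_mul_of_nonneg_left (pow_le_pow_left₀ (supOn_nonneg _ _) hle 2) (ha i)

lemma abs_apply_mul_sqrt_pointWeight_le (ha : ∀ i, 0 ≤ a i) (hsum : Summable a) (x : C(X, ℝ)) :
    |x t| * √(pointWeight a D t) ≤ weightedSupNorm a D x := by
  rw [← Real.sqrt_sq_eq_abs, ← Real.sqrt_mul (sq_nonneg _), pointWeight, ← tsum_mul_left]
  refine Real.sqrt_le_sqrt <| ((hsum.indicator _).mul_left _).tsum_le_tsum (fun i => ?_)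
    (summable_mul_supOn_sq ha hsum x)
  by_cases ht : t ∈ D i
  · have hle : |x t| ≤ supOn (D i) x := abs_apply_le_supOn (fun s _ => x.norm_coe_le_norm s) ht
    calc x t ^ 2 * {i | t ∈ D i}.indicator a i = a i * |x t| ^ 2 := by simp [ht, mul_comm]
      _ ≤ a i * supOn (D i) x ^ 2 :=
        mul_le_mul_of_nonneg_left (pow_le_pow_left₀ (abs_nonneg _) hle 2) (ha i)
  · simpa [ht] using mul_nonneg (ha i) (sq_nonneg (supOn (D i) x))

end CompactSpace

section CompletelyRegularSpace

variable [CompletelyRegularSpace X]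

lemma exists_continuousMap_eq_one_eqOn_zero {K : Set X} (hK : IsClosed K) (ht : t ∉ K) :
    ∃ x : C(X, ℝ), x t = 1 ∧ (∀ s, |x s| ≤ 1) ∧ EqOn x 0 K := by
  obtain ⟨f, hf, hft, hfK⟩ := CompletelyRegularSpace.completely_regular t K hK ht
  refine ⟨⟨fun s => 1 - f s, by fun_prop⟩, by simp [hft], fun s => ?_, fun s hs => ?_⟩
  · exact (abs_of_nonneg (unitInterval.one_minus_nonneg (f s))).trans_le
      (unitInterval.one_minus_le_one (f s))
  · simp [hfK hs]

lemma exists_tendsto_weightedSupNorm (ha : ∀ i, 0 ≤ a i) (hsum : Summable a)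
    (hclos : ∀ i, t ∉ D i → t ∉ closure (D i)) :
    ∃ x : Finset ι → C(X, ℝ), (∀ F, x F t = 1) ∧
      Tendsto (fun F => weightedSupNorm a D (x F)) atTop (𝓝 √(pointWeight a D t)) := by
  let K (F : Finset ι) : Set X := ⋃ i ∈ F.filter (t ∉ D ·), closure (D i)
  have hK (F : Finset ι) : IsClosed (K F) := isClosed_biUnion_finset fun _ _ => isClosed_closure
  have htK (F : Finset ι) : t ∉ K F := by
    simp only [K, mem_iUnion, Finset.mem_filter, not_exists]
    exact fun i hi => hclos i hi.2
  choose x hxt hx hxK using fun F => exists_continuousMap_eq_one_eqOn_zero (hK F) (htK F)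
  refine ⟨x, hxt, tendsto_weightedSupNorm ha hsum hx hxt fun i ht => ?_⟩
  filter_upwards [eventually_ge_atTop {i}] with F hF
  have hi : i ∈ F.filter (t ∉ D ·) := Finset.mem_filter.2 ⟨Finset.singleton_subset_iff.1 hF, ht⟩
  exact (hxK F).mono (subset_closure.trans (subset_biUnion_of_mem (u := fun i => closure (D i)) hi))

end CompletelyRegularSpace

theorem dual_norm_eval_general [CompactSpace X] [CompletelyRegularSpace X] (ha : ∀ i, 0 ≤ a i)
    (hsum : Summable a) (hw : 0 < pointWeight a D t)
    (hclos : ∀ i, t ∉ D i → t ∉ closure (D i)) :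
    IsLUB {r : ℝ | ∃ x : C(X, ℝ), weightedSupNorm a D x ≤ 1 ∧ r = |x t|}
      (1 / √(pointWeight a D t)) := by
  have hsqrt : 0 < √(pointWeight a D t) := Real.sqrt_pos.2 hw
  have hkey (x : C(X, ℝ)) := abs_apply_mul_sqrt_pointWeight_le (D := D) (t := t) ha hsum x
  refine ⟨?_, fun M hM => ?_⟩
  · rintro _ ⟨x, hx, rfl⟩
    exact (le_div_iff₀ hsqrt).2 ((hkey x).trans hx)
  · obtain ⟨x, hxt, hlim⟩ := exists_tendsto_weightedSupNorm ha hsum hclos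
    have hpos (F : Finset ι) : 0 < weightedSupNorm a D (x F) :=
      hsqrt.trans_le (by simpa [hxt F] using hkey (x F))
    have hle (F : Finset ι) : 1 ≤ M * weightedSupNorm a D (x F) := by
      simpa [hxt F] using
        abs_apply_le_mul_weightedSupNorm (fun y hy => hM ⟨y, hy, rfl⟩) (hpos F)
    exact (div_le_iff₀ hsqrt).2 (ge_of_tendsto' (hlim.const_mul M) hle)

end WeightedSupNorm

/-- Let `t ∈ [0,1]`, `J(t) = {n : t ∈ Dₙ}` and `w(t) = Σ_{n ∈ J(t)} 2⁻ⁿ` (with the same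
weights `2^{-(n+1)}` as in `normD`). If `t` is not in the closure of `Dₙ` for every
`n ∉ J(t)`, then the dual norm of the evaluation functional `δ_t` on
`X_D = (C[0,1], ‖·‖_D)`, i.e. `sup {|x(t)| : ‖x‖_D ≤ 1}`, equals `1/√(w(t))`. -/

theorem dual_norm_eval (D : ℕ → Set (Icc (0:ℝ) 1))
    (hDopen : ∀ n, IsOpen (D n)) (hDne : ∀ n, (D n).Nonempty)
    (hbasis : TopologicalSpace.IsTopologicalBasis (Set.range D))
    (t : Icc (0:ℝ) 1)
    (hclos : ∀ n : ℕ, t ∉ D n → t ∉ closure (D n)) :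
    sSup {r : ℝ | ∃ x : C(Icc (0:ℝ) 1, ℝ), normD D x ≤ 1 ∧ r = |x t|} =
      1 / Real.sqrt (∑' n : ℕ, if t ∈ D n then (1 / 2 : ℝ) ^ (n + 1) else 0) := by
  have hweight (n : ℕ) : 0 < (1 / 2 : ℝ) ^ (n + 1) := by positivity
  have hsum : Summable fun n : ℕ => (1 / 2 : ℝ) ^ (n + 1) :=
    (summable_nat_add_iff 1).2 summable_geometric_two
  obtain ⟨_, ⟨n, rfl⟩, hn, -⟩ := hbasis.exists_subset_of_mem_open (mem_univ t) isOpen_univ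
  have hlub := dual_norm_eval_general (fun n => (hweight n).le) hsum
    (pointWeight_pos (fun n => (hweight n).le) hsum (hweight n) hn) hclos
  exact hlub.csSup_eq hlub.nonempty
end
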